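/- The thermodynamic limit energy per unit volume is symmetric about ρ = 1/2: for every ρ ∈ [0,1], e(ρ) = e(1−ρ). -/

import Mathlib

open MeasureTheory Metric Set Filter Bornology
open scoped Topology ENNReal NNReal Pointwise

noncomputable section

/-- Three-dimensional Euclidean space. -/
abbrev E3 : Type := EuclideanSpace ℝ (Fin 3)

/-- The divergence of a vector field on `E3`, defined as the trace of its derivative. -/
def divg (φ : E3 → E3) (x : E3) : ℝ :=
  LinearMap.trace ℝ E3 (fderiv ℝ φ x : E3 →ₗ[ℝ] E3)

/-- The candidate values `∫_Ω div φ` over `C¹` compactly supported vector fields bounded by one. -/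
def perCand (Ω : Set E3) : Set ℝ :=
  {a : ℝ | ∃ φ : E3 → E3, ContDiff ℝ 1 φ ∧ HasCompactSupport φ ∧
      (∀ x, ‖φ x‖ ≤ 1) ∧ a = ∫ x in Ω, divg φ x}

/-- The perimeter of a set, in the sense of geometric measure theory. -/
def per (Ω : Set E3) : ℝ := sSup (perCand Ω)

/-- A set has finite perimeter if the family of integrals defining the perimeter is
bounded above. -/
def HasFinPer (Ω : Set E3) : Prop := BddAbove (perCand Ω)

/-- The Lebesgue volume of a set as a real number. -/
def vol (Ω : Set E3) : ℝ := (volume Ω).toReal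

/-- The liquid drop energy `𝓔_Λ[ρ,Ω]`. -/
def ldEnergy (Λ : Set E3) (ρ : ℝ) (Ω : Set E3) : ℝ :=
  per Ω + (1/2) * ∫ x, ∫ y,
    (Set.indicator Ω (fun _ => (1:ℝ)) x - ρ * Set.indicator Λ (fun _ => (1:ℝ)) x) *
      (Set.indicator Ω (fun _ => (1:ℝ)) y - ρ * Set.indicator Λ (fun _ => (1:ℝ)) y) / ‖x - y‖

/-- The neutral ground state energy `E_Λ(ρ)`. -/
def EE (Λ : Set E3) (ρ : ℝ) : ℝ :=
  sInf {t : ℝ | ∃ Ω : Set E3, MeasurableSet Ω ∧ Ω ⊆ Λ ∧ HasFinPer Ω ∧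
    vol Ω = ρ * vol Λ ∧ t = ldEnergy Λ ρ Ω}

/-- The liquid drop energy `I[Ω]` of an isolated droplet (no background). -/
def II (Ω : Set E3) : ℝ :=
  per Ω + (1/2) * ∫ x in Ω, ∫ y in Ω, 1 / ‖x - y‖

/-- `μ* = inf I[Ω]/|Ω|`. -/
def muStar : ℝ :=
  sInf {t : ℝ | ∃ Ω : Set E3, MeasurableSet Ω ∧ HasFinPer Ω ∧
    0 < volume Ω ∧ volume Ω < ⊤ ∧ t = II Ω / vol Ω}

/-- A minimizer for the isolated liquid drop problem. -/
def IsMinimizer (Ω : Set E3) : Prop :=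
  MeasurableSet Ω ∧ HasFinPer Ω ∧ 0 < volume Ω ∧ volume Ω < ⊤ ∧ II Ω = muStar * vol Ω

/-- The set of masses of minimizers. -/
def minimizerMasses : Set ℝ := {m : ℝ | ∃ Ω : Set E3, IsMinimizer Ω ∧ m = vol Ω}

/-- The largest mass of a minimizer. -/
def mStar : ℝ := sSup minimizerMasses

/-- The smallest mass of a minimizer. -/
def mStarStar : ℝ := sInf minimizerMasses

/-- `Λ` is an `(r,L)`-Lipschitz open set: near each boundary point it is, in a suitable
orthonormal coordinate system, the epigraph of an `L`-Lipschitz function. -/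
def IsLipschitzDomain (r L : ℝ) (Λ : Set E3) : Prop :=
  ∀ x ∈ frontier Λ, ∃ (g : E3 ≃ᵢ E3) (f : ℝ × ℝ → ℝ),
    LipschitzWith L.toNNReal f ∧
    Λ ∩ ball x r = {y ∈ ball x r | f (g y 0, g y 1) < g y 2}

/-- Fisher regularity of the boundary. -/
def FisherCond (C ℓ : ℝ) (Λ : Set E3) : Prop :=
  ∀ h : ℝ, 0 < h → h ≤ ℓ → (volume (frontier Λ + ball (0:E3) h)).toReal ≤ C * ℓ^2 * h

/-- An admissible sequence of domains for the thermodynamic limit. -/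
def IsAdmissibleSeq (r L C : ℝ) (Λs : ℕ → Set E3) (ℓ : ℕ → ℝ) : Prop :=
  Tendsto ℓ atTop atTop ∧
  ∀ n : ℕ, IsOpen (Λs n) ∧ IsBounded (Λs n) ∧ IsLipschitzDomain r L (Λs n) ∧
    ball 0 (ℓ n / C) ⊆ Λs n ∧ Λs n ⊆ ball 0 (ℓ n) ∧ FisherCond C (ℓ n) (Λs n)

/-- `e` is the thermodynamic limit function of the liquid drop model. -/
def IsThermoLimit (e : ℝ → ℝ) : Prop :=
  ∀ ρ : ℝ, 0 ≤ ρ → ρ ≤ 1 →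
    ∀ (r L C : ℝ) (Λs : ℕ → Set E3) (ℓ : ℕ → ℝ), 0 < r → 0 < L → 0 < C →
      IsAdmissibleSeq r L C Λs ℓ →
      Tendsto (fun n => EE (Λs n) ρ / vol (Λs n)) atTop (𝓝 (e ρ))

/-- The domain for the `N`-particle Jellium problem: `N^{1/3} Λ₁` with `Λ₁` the ball of
unit volume centered at the origin. -/
def jelDomain (N : ℕ) : Set E3 :=
  ball (0:E3) ((N : ℝ) ^ ((1:ℝ)/3) * (3 / (4 * Real.pi)) ^ ((1:ℝ)/3))

/-- The `N`-particle Jellium ground state energy. -/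
def jelN (N : ℕ) : ℝ :=
  sInf {t : ℝ | ∃ x : Fin N → E3, (∀ j, x j ∈ jelDomain N) ∧
    t = (∑ j : Fin N, ∑ k : Fin N, if j < k then 1 / ‖x j - x k‖ else 0)
      - (∑ j : Fin N, ∫ y in jelDomain N, 1 / ‖x j - y‖)
      + (1/2) * ∫ x' in jelDomain N, ∫ y in jelDomain N, 1 / ‖x' - y‖}

/-- `eJ` is the Jellium energy per particle in the thermodynamic limit. -/
def IsJelliumLimit (eJ : ℝ) : Prop :=
  Tendsto (fun N : ℕ => jelN N / (N : ℝ)) atTop (𝓝 eJ)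

/-- The grand-canonical liquid drop energy `F_Λ(ρ)`. -/
def FF (Λ : Set E3) (ρ : ℝ) : ℝ :=
  sInf {t : ℝ | ∃ Ω : Set E3, MeasurableSet Ω ∧ Ω ⊆ Λ ∧ HasFinPer Ω ∧
    t = ldEnergy Λ ρ Ω - muStar * vol Ω}

/-- A tetrahedron: the interior of the convex hull of four affinely independent points. -/
def IsTetra (Δ : Set E3) : Prop :=
  ∃ v : Fin 4 → E3, AffineIndependent ℝ v ∧ Δ = interior (convexHull ℝ (Set.range v))

/-- The open cube `(-L/2, L/2)³`. -/
def cubeL (Lside : ℝ) : Set E3 := {x : E3 | ∀ i, |x i| < Lside / 2}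

/-- The grand-canonical Jellium energy of point particles of charge `m` in the domain `S`
with a uniform background of density one. -/
def pointJellium (m : ℝ) (S : Set E3) : ℝ :=
  sInf {t : ℝ | ∃ (n : ℕ) (x : Fin n → E3), (∀ j, x j ∈ S) ∧
    t = (∑ j : Fin n, ∑ k : Fin n, if j < k then m^2 / ‖x j - x k‖ else 0)
      - m * (∑ j : Fin n, ∫ y in S, 1 / ‖x j - y‖)
      + (1/2) * ∫ x' in S, ∫ y in S, 1 / ‖x' - y‖}

/-- The conclusions of the decomposition theorem for minimizing sequences. -/
def IsDecomp (Ω : ℕ → Set E3) (m : ℝ) (K : ℕ) (Ωs : Fin K → Set E3)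
    (a : ℕ → Fin K → E3) (R : ℝ) (φ : ℕ → ℕ) : Prop :=
  StrictMono φ ∧ 0 < R ∧
  (∀ j k : Fin K, j ≠ k → Tendsto (fun n => ‖a n j - a n k‖) atTop atTop) ∧
  (∀ j, IsMinimizer (Ωs j)) ∧
  (∀ j, mStarStar ≤ vol (Ωs j) ∧ vol (Ωs j) ≤ mStar) ∧
  (∀ j, Tendsto
    (fun n => volume (symmDiff ({x : E3 | x + a n j ∈ Ω (φ n)} ∩ ball (0:E3) R) (Ωs j)))
    atTop (𝓝 0)) ∧
  Tendsto (fun n => volume (Ω (φ n) \ ⋃ j, ball (a n j) R)) atTop (𝓝 0) ∧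
  Tendsto (fun n => per (Ω (φ n) \ ⋃ j, ball (a n j) R)) atTop (𝓝 0) ∧
  m = ∑ j, vol (Ωs j) ∧
  (2 ≤ K → ∃ ε : ℕ → ℝ, Tendsto ε atTop (𝓝 0) ∧ ∀ n : ℕ,
    muStar * vol (Ω (φ n)) +
      (∑ j : Fin K, ∑ k : Fin K,
        if j < k then (vol (Ωs j) * vol (Ωs k) + ε n) / ‖a n j - a n k‖ else 0)
      ≤ II (Ω (φ n)))

instance : MeasurableSpace (Matrix (Fin 3) (Fin 3) ℝ) :=
  (inferInstance : MeasurableSpace (Fin 3 → Fin 3 → ℝ))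

/-- The rotation group SO(3), as a set of matrices. -/
def SO3 : Set (Matrix (Fin 3) (Fin 3) ℝ) := {R | R * R.transpose = 1 ∧ R.det = 1}

/-- The action of a matrix on Euclidean space. -/
def rot (R : Matrix (Fin 3) (Fin 3) ℝ) (x : E3) : E3 :=
  (EuclideanSpace.equiv (Fin 3) ℝ).symm (R.mulVec (EuclideanSpace.equiv (Fin 3) ℝ x))

/-- The image of a set under the rigid motion `x ↦ Rx + τ`. -/
def rigidImage (R : Matrix (Fin 3) (Fin 3) ℝ) (τ : E3) (S : Set E3) : Set E3 :=
  (fun x => rot R x + τ) '' S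

/-- `μ` is the normalized Haar measure of SO(3): a probability measure concentrated on SO(3)
which is invariant under left multiplication by rotations. -/
def IsHaarSO3 (μ : Measure (Matrix (Fin 3) (Fin 3) ℝ)) : Prop :=
  IsProbabilityMeasure μ ∧ μ SO3ᶜ = 0 ∧ ∀ S ∈ SO3, Measure.map (fun R => S * R) μ = μ

/-- The cube of the tiling of side length `ε` indexed by `z ∈ ℤ³`. -/
def cubeZ (ε : ℝ) (z : Fin 3 → ℤ) : Set E3 := {x : E3 | ∀ i, |x i - ε * (z i : ℝ)| < ε / 2}

/-- The distance between two sets. -/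
def setDist (s t : Set E3) : ℝ := sInf {d : ℝ | ∃ p ∈ s, ∃ q ∈ t, d = dist p q}

/-- The outer cubic boundary layer of `Λ` at scale `ε`. -/
def outerLayer (Λ : Set E3) (ε : ℝ) : Set E3 :=
  ⋃ z ∈ {z : Fin 3 → ℤ | setDist (cubeZ ε z) (frontier Λ) ≤ ε}, closure (cubeZ ε z \ Λ)

/-! ### Auxiliary lemmas -/

lemma aux_vol_ball (R : ℝ) (hR : 0 ≤ R) :
    volume.real (ball (0:E3) R) = R ^ 3 * volume.real (ball (0:E3) 1) := by
  rw [measureReal_def, Measure.addHaar_ball volume (0:E3) hR, ENNReal.toReal_mul,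
    ENNReal.toReal_ofReal (by positivity), measureReal_def]
  simp

lemma aux_vol_ball_pos : 0 < volume.real (ball (0:E3) 1) :=
  ENNReal.toReal_pos (measure_ball_pos _ _ one_pos).ne' measure_ball_lt_top.ne

lemma aux_annulus (R h : ℝ) (hh : 0 < h) (hR : h ≤ R) :
    volume.real (ball (0:E3) (R + h) \ ball (0:E3) (R - h))
      ≤ 8 * volume.real (ball (0:E3) 1) * R ^ 2 * h := by
  rw [measureReal_sdiff (ball_subset_ball (by linarith)) measurableSet_ball
    measure_ball_lt_top.ne,
    aux_vol_ball (R + h) (by linarith), aux_vol_ball (R - h) (by linarith)]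
  have hc := aux_vol_ball_pos
  have : (R + h) ^ 3 - (R - h) ^ 3 ≤ 8 * R ^ 2 * h := by
    nlinarith [mul_nonneg hh.le (mul_nonneg (sub_nonneg.2 hR) (by linarith : 0 ≤ R + h))]
  nlinarith

lemma aux_fisher (R : ℝ) (hR : 0 < R) :
    FisherCond (8 * volume.real (ball (0:E3) 1) + 1) R (ball 0 R) := by
  intro h hh hhR
  have hsub : frontier (ball (0:E3) R) + ball (0:E3) h
      ⊆ ball (0:E3) (R + h) \ ball (0:E3) (R - h) := by
    rintro _ ⟨x, hx, y, hy, rfl⟩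
    rw [frontier_ball _ hR.ne', mem_sphere_zero_iff_norm] at hx
    rw [mem_ball_zero_iff] at hy
    have h1 := norm_add_le x y
    have h2 := norm_sub_le (x + y) y
    rw [add_sub_cancel_right] at h2
    simp only [Set.mem_sdiff, mem_ball_zero_iff, not_lt]
    constructor <;> linarith
  have h1 := aux_annulus R h hh hhR
  have h2 : volume.real (frontier (ball (0:E3) R) + ball (0:E3) h) ≤
      volume.real (ball (0:E3) (R + h) \ ball (0:E3) (R - h)) :=
    measureReal_mono hsub
      (ne_top_of_le_ne_top measure_ball_lt_top.ne (measure_mono sdiff_subset))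
  have h3 : 0 ≤ R ^ 2 * h := by positivity
  change volume.real _ ≤ _
  nlinarith

lemma aux_lip_f (R : ℝ) (hR : 0 < R) : LipschitzWith (2:ℝ).toNNReal
    (fun u : ℝ × ℝ => - Real.sqrt (R ^ 2 - (min ‖Complex.mk u.1 u.2‖ (R / 2)) ^ 2)) := by
  refine LipschitzWith.of_dist_le_mul fun u v => ?_
  rw [Real.coe_toNNReal _ (by norm_num), Real.dist_eq]
  set m := min ‖Complex.mk u.1 u.2‖ (R / 2) with hm
  set m' := min ‖Complex.mk v.1 v.2‖ (R / 2) with hm'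
  have m0 : 0 ≤ m := le_min (norm_nonneg _) (by positivity)
  have m0' : 0 ≤ m' := le_min (norm_nonneg _) (by positivity)
  have mR : m ≤ R / 2 := min_le_right _ _
  have mR' : m' ≤ R / 2 := min_le_right _ _
  have hmm : |m - m'| ≤ 2 * dist u v := by
    have h1 : |m - m'| ≤ |‖Complex.mk u.1 u.2‖ - ‖Complex.mk v.1 v.2‖| := by
      have := abs_min_sub_min_le_max ‖Complex.mk u.1 u.2‖ (R / 2) ‖Complex.mk v.1 v.2‖ (R / 2)
      simpa using this
    have h2 := abs_norm_sub_norm_le (Complex.mk u.1 u.2) (Complex.mk v.1 v.2)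
    have h3 := Complex.norm_le_abs_re_add_abs_im (Complex.mk u.1 u.2 - Complex.mk v.1 v.2)
    simp only [Complex.sub_re, Complex.sub_im] at h3
    have h4 : |u.1 - v.1| ≤ dist u v := by
      rw [Prod.dist_eq, ← Real.dist_eq]; exact le_max_left _ _
    have h5 : |u.2 - v.2| ≤ dist u v := by
      rw [Prod.dist_eq, ← Real.dist_eq]; exact le_max_right _ _
    linarith
  refine le_trans ?_ hmm
  set a := Real.sqrt (R ^ 2 - m ^ 2) with ha
  set b := Real.sqrt (R ^ 2 - m' ^ 2) with hb
  have ha2 : a ^ 2 = R ^ 2 - m ^ 2 := Real.sq_sqrt (by nlinarith)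
  have hb2 : b ^ 2 = R ^ 2 - m' ^ 2 := Real.sq_sqrt (by nlinarith)
  have ham : R / 2 ≤ a := Real.le_sqrt_of_sq_le (by nlinarith)
  have hbm : R / 2 ≤ b := Real.le_sqrt_of_sq_le (by nlinarith)
  have key : |-a - -b| * (a + b) ≤ |m - m'| * (a + b) := by
    have e1 : |-a - -b| * (a + b) = |m - m'| * (m + m') := by
      rw [← abs_of_nonneg (by linarith : 0 ≤ a + b), ← abs_of_nonneg (by linarith : 0 ≤ m + m'),
        ← abs_mul, ← abs_mul]
      congr 1
      nlinarith
    rw [e1]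
    exact mul_le_mul_of_nonneg_left (by linarith) (abs_nonneg _)
  exact le_of_mul_le_mul_right key (by linarith)

lemma aux_lipschitz (R : ℝ) (hR : 1 ≤ R) : IsLipschitzDomain (1/2) 2 (ball (0:E3) R) := by
  intro x hx
  have hR0 : 0 < R := by linarith
  rw [frontier_ball _ hR0.ne', mem_sphere_zero_iff_norm] at hx
  have hon : Orthonormal ℝ (({2} : Set (Fin 3)).domRestrict (fun _ : Fin 3 => -(R⁻¹ • x))) := by
    constructor
    · intro i
      simp [norm_smul, hx, abs_of_pos hR0, hR0.ne']
    · intro i j hij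
      exact absurd (Subsingleton.elim i j) hij
  obtain ⟨b, hb⟩ := hon.exists_orthonormalBasis_extension_of_card_eq (by simp)
  have hb2 : b 2 = -(R⁻¹ • x) := hb 2 rfl
  have hxb : x = -(R • b 2) := by
    rw [hb2, smul_neg, neg_neg, smul_smul, mul_inv_cancel₀ hR0.ne', one_smul]
  refine ⟨b.repr.toIsometryEquiv, _, aux_lip_f R hR0, ?_⟩
  ext y
  simp only [mem_inter_iff, mem_ofPred_eq, LinearIsometryEquiv.coe_toIsometryEquiv]
  rw [and_comm]
  refine and_congr_right fun hy => ?_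
  have ny : ‖y‖ ^ 2 = b.repr y 0 ^ 2 + b.repr y 1 ^ 2 + b.repr y 2 ^ 2 := by
    rw [← b.repr.norm_map y, EuclideanSpace.norm_sq_eq]
    simp [Fin.sum_univ_three]
  have nyx : ‖y - x‖ ^ 2 = b.repr y 0 ^ 2 + b.repr y 1 ^ 2 + (b.repr y 2 + R) ^ 2 := by
    rw [← b.repr.norm_map (y - x), EuclideanSpace.norm_sq_eq, map_sub]
    nth_rewrite 1 [hxb]
    simp [Fin.sum_univ_three]
  rw [mem_ball, dist_eq_norm] at hy
  have hy2 : ‖y - x‖ ^ 2 < (1/2) ^ 2 := by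
    have := norm_nonneg (y - x)
    nlinarith
  rw [nyx] at hy2
  rw [mem_ball_zero_iff]
  set p := b.repr y 0
  set q := b.repr y 1
  set t := b.repr y 2
  have hn : ‖Complex.mk p q‖ ^ 2 = p ^ 2 + q ^ 2 := by
    rw [Complex.sq_norm, Complex.normSq_apply]; ring
  have hle : ‖Complex.mk p q‖ ≤ R / 2 := by
    apply le_of_sq_le_sq _ (by positivity)
    nlinarith [sq_nonneg (t + R)]
  have ht : t < 0 := by
    have : (t + R) ^ 2 < (1/2) ^ 2 := by nlinarith [sq_nonneg p, sq_nonneg q]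
    have := abs_lt_of_sq_lt_sq this (by norm_num)
    have := (abs_lt.1 this).2
    linarith
  rw [min_eq_left hle, hn, neg_lt, Real.lt_sqrt (by linarith), ← sq_lt_sq₀ (norm_nonneg _) hR0.le,
    ny]
  constructor <;> intro h <;> linarith

lemma aux_lineDeriv (R : ℝ) (hR : 0 < R) (g : E3 → ℝ) (hg : ContDiff ℝ 1 g)
    (hgs : HasCompactSupport g) (hg1 : ∀ x, |g x| ≤ 1) (v : E3) (hv : ‖v‖ = 1) :
    ∫ x in ball (0:E3) R, lineDeriv ℝ g x v ≤ 8 * volume.real (ball (0:E3) 1) * R ^ 2 := by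
  obtain ⟨K, hK⟩ := ContDiff.lipschitzWith_of_hasCompactSupport hgs hg one_ne_zero
  set χ : E3 → ℝ := (ball (0:E3) R).indicator (fun _ => (1:ℝ)) with hχ
  have hχi : Integrable χ := by
    rw [hχ, integrable_indicator_iff measurableSet_ball]
    exact integrableOn_const measure_ball_lt_top.ne
  have hlim := hK.integral_inv_smul_sub_mul_tendsto_integral_lineDeriv_mul (μ := volume) hχi v
  have heq : ∫ x in ball (0:E3) R, lineDeriv ℝ g x v = ∫ x, lineDeriv ℝ g x v * χ x := by
    rw [← integral_indicator measurableSet_ball]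
    congr 1
    ext x
    by_cases hx : x ∈ ball (0:E3) R <;> simp [hχ, indicator_of_mem, indicator_of_notMem, hx]
  rw [heq]
  refine le_of_tendsto hlim ?_
  have hpos : ∀ᶠ t : ℝ in 𝓝[>] 0, t ∈ Ioo (0:ℝ) R := Ioo_mem_nhdsGT hR
  filter_upwards [hpos] with t ht
  have ht0 : 0 < t := ht.1
  have hgc := hg.continuous
  have bdd : ∀ x, ‖g x‖ ≤ 1 := hg1
  have i1 : Integrable (fun x => g x * χ x) :=
    hχi.bdd_mul hgc.aestronglyMeasurable (ae_of_all _ bdd)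
  have i2 : Integrable (fun x => g (x + t • v) * χ x) :=
    hχi.bdd_mul (hgc.comp (by fun_prop)).aestronglyMeasurable (ae_of_all _ fun x => bdd _)
  have i3 : Integrable (fun x => g x * χ (x - t • v)) :=
    (hχi.comp_sub_right (t • v)).bdd_mul hgc.aestronglyMeasurable (ae_of_all _ bdd)
  have e1 : ∫ x, g (x + t • v) * χ x = ∫ x, g x * χ (x - t • v) := by
    rw [← integral_add_right_eq_self (fun x => g x * χ (x - t • v)) (t • v)]
    simp
  have e2 : ∫ x, (t⁻¹ • (g (x + t • v) - g x)) * χ x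
      = t⁻¹ * ∫ x, (g x * χ (x - t • v) - g x * χ x) := by
    rw [integral_sub i3 i1, ← e1, ← integral_sub i2 i1, ← integral_const_mul]
    congr 1
    ext x
    simp only [smul_eq_mul]
    ring
  rw [e2]
  set A := ball (0:E3) (R + t) \ ball (0:E3) (R - t) with hA
  have hAm : MeasurableSet A := measurableSet_ball.diff measurableSet_ball
  have hAf : volume A ≠ ⊤ := ne_top_of_le_ne_top measure_ball_lt_top.ne (measure_mono sdiff_subset)
  have hntv : ‖t • v‖ = t := by rw [norm_smul, hv, mul_one, Real.norm_of_nonneg ht0.le]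
  have hbound : ∫ x, (g x * χ (x - t • v) - g x * χ x) ≤ volume.real A := by
    have : volume.real A = ∫ x, A.indicator (fun _ => (1:ℝ)) x := by
      rw [integral_indicator hAm]; simp
    rw [this]
    refine integral_mono (i3.sub i1) ?_ ?_
    · rw [integrable_indicator_iff hAm]
      exact integrableOn_const hAf
    · intro x
      have hx1 := abs_le.1 (hg1 x)
      have n1 := norm_sub_le x (t • v)
      have n2 := norm_add_le (x - t • v) (t • v)
      rw [sub_add_cancel] at n2
      rw [hntv] at n1 n2
      by_cases ha : x ∈ ball (0:E3) R <;> by_cases hb : x - t • v ∈ ball (0:E3) R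
      · simp only [hχ, indicator_of_mem ha, indicator_of_mem hb, sub_self]
        exact indicator_nonneg (fun _ _ => zero_le_one) _
      · have : x ∈ A := by
          rw [mem_ball_zero_iff] at ha hb
          simp only [hA, Set.mem_sdiff, mem_ball_zero_iff]
          constructor <;> linarith
        simp only [hχ, indicator_of_mem ha, indicator_of_notMem hb, indicator_of_mem this]
        linarith
      · have : x ∈ A := by
          rw [mem_ball_zero_iff] at ha hb
          simp only [hA, Set.mem_sdiff, mem_ball_zero_iff]
          constructor <;> linarith
        simp only [hχ, indicator_of_mem hb, indicator_of_notMem ha, indicator_of_mem this]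
        linarith
      · simp only [hχ, indicator_of_notMem ha, indicator_of_notMem hb, sub_self]
        exact indicator_nonneg (fun _ _ => zero_le_one) _
  have hann := aux_annulus R t ht0 ht.2.le
  calc t⁻¹ * ∫ x, (g x * χ (x - t • v) - g x * χ x)
      ≤ t⁻¹ * (8 * volume.real (ball (0:E3) 1) * R ^ 2 * t) :=
        mul_le_mul_of_nonneg_left (hbound.trans hann) (by positivity)
    _ = _ := by field_simp

lemma aux_divg (φ : E3 → E3) (hφ : ContDiff ℝ 1 φ) (x : E3) :
    divg φ x = ∑ i : Fin 3, lineDeriv ℝ (fun y => φ y i) x (EuclideanSpace.single i 1) := by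
  have hd : DifferentiableAt ℝ φ x := hφ.differentiable one_ne_zero x
  have hdi : ∀ i : Fin 3, HasFDerivAt (fun y => φ y i)
      ((EuclideanSpace.proj i : E3 →L[ℝ] ℝ).comp (fderiv ℝ φ x)) x := fun i =>
    (EuclideanSpace.proj i : E3 →L[ℝ] ℝ).hasFDerivAt.comp x hd.hasFDerivAt
  rw [divg, LinearMap.trace_eq_sum_inner _ (EuclideanSpace.basisFun (Fin 3) ℝ)]
  refine Finset.sum_congr rfl fun i _ => ?_
  rw [(hdi i).differentiableAt.lineDeriv_eq_fderiv, (hdi i).fderiv]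
  simp [EuclideanSpace.inner_single_left]

lemma aux_divg_integrable (φ : E3 → E3) (hφ : ContDiff ℝ 1 φ) (hs : HasCompactSupport φ) :
    Integrable (divg φ) := by
  have hc : Continuous (divg φ) := by
    have h1 : Continuous (fderiv ℝ φ) := hφ.continuous_fderiv one_ne_zero
    have h2 : divg φ = fun x => ∑ i : Fin 3, (fderiv ℝ φ x (EuclideanSpace.single i 1)) i := by
      ext x
      rw [divg, LinearMap.trace_eq_sum_inner _ (EuclideanSpace.basisFun (Fin 3) ℝ)]
      simp [EuclideanSpace.inner_single_left]
    rw [h2]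
    fun_prop
  refine hc.integrable_of_hasCompactSupport ?_
  exact (hs.fderiv ℝ).comp_left (g := fun T : E3 →L[ℝ] E3 =>
    LinearMap.trace ℝ E3 (T : E3 →ₗ[ℝ] E3)) (by simp)

lemma aux_per_ball (R : ℝ) (hR : 0 < R) :
    ∀ a ∈ perCand (ball (0:E3) R), a ≤ 24 * volume.real (ball (0:E3) 1) * R ^ 2 := by
  rintro a ⟨φ, hφ, hs, h1, rfl⟩
  have hg : ∀ i : Fin 3, ContDiff ℝ 1 (fun y => φ y i) := fun i =>
    (EuclideanSpace.proj i : E3 →L[ℝ] ℝ).contDiff.comp hφ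
  have hgs : ∀ i : Fin 3, HasCompactSupport (fun y => φ y i) := fun i =>
    hs.comp_left (g := fun z : E3 => z i) rfl
  have hb : ∀ i : Fin 3, ∀ x, |φ x i| ≤ 1 := fun i x =>
    (PiLp.norm_apply_le (φ x) i).trans (h1 x)
  have hint : ∀ i : Fin 3, Integrable
      (fun x => lineDeriv ℝ (fun y => φ y i) x (EuclideanSpace.single i 1)) := by
    intro i
    have : (fun x => lineDeriv ℝ (fun y => φ y i) x (EuclideanSpace.single i 1))
        = fun x => fderiv ℝ (fun y => φ y i) x (EuclideanSpace.single i 1) := by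
      ext x
      exact ((hg i).differentiable one_ne_zero x).lineDeriv_eq_fderiv
    rw [this]
    refine Continuous.integrable_of_hasCompactSupport ?_ ((hgs i).fderiv_apply ℝ _)
    exact ((hg i).continuous_fderiv one_ne_zero).clm_apply continuous_const
  simp_rw [aux_divg φ hφ]
  rw [integral_finsetSum _ fun i _ => (hint i).integrableOn]
  calc _ ≤ ∑ i : Fin 3, 8 * volume.real (ball (0:E3) 1) * R ^ 2 :=
        Finset.sum_le_sum fun i _ => aux_lineDeriv R hR _ (hg i) (hgs i) (hb i) _ (by simp)
    _ = _ := by simp; ring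

lemma aux_perCand_zero (Ω : Set E3) : (0:ℝ) ∈ perCand Ω := by
  refine ⟨fun _ => 0, contDiff_const, HasCompactSupport.zero, by simp, ?_⟩
  simp [divg]

lemma aux_perCand_diff (Λ Ω : Set E3) (hΩ : MeasurableSet Ω) (hsub : Ω ⊆ Λ)
    (P : ℝ) (hP : ∀ a ∈ perCand Λ, a ≤ P) (hf : HasFinPer Ω) :
    HasFinPer (Λ \ Ω) ∧ per (Λ \ Ω) ≤ per Ω + P := by
  have key : ∀ a ∈ perCand (Λ \ Ω), a ≤ per Ω + P := by
    rintro a ⟨φ, hφ, hs, h1, rfl⟩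
    have hi := aux_divg_integrable φ hφ hs
    rw [setIntegral_sdiff hΩ hi.integrableOn hsub]
    have h2 : ∫ x in Λ, divg φ x ≤ P := hP _ ⟨φ, hφ, hs, h1, rfl⟩
    have h3 : -∫ x in Ω, divg φ x ≤ per Ω := by
      refine le_csSup hf ⟨-φ, hφ.neg, hs.neg, by simpa using h1, ?_⟩
      rw [← integral_neg]
      congr 1
      ext x
      simp [divg, fderiv_neg]
    linarith
  exact ⟨⟨_, key⟩, csSup_le ⟨0, aux_perCand_zero _⟩ key⟩

lemma aux_step (Λ : Set E3) (hΛ : MeasurableSet Λ) (hfin : volume Λ ≠ ⊤)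
    (P : ℝ) (hP : ∀ a ∈ perCand Λ, a ≤ P) (ρ : ℝ) (t : ℝ)
    (ht : t ∈ {t : ℝ | ∃ Ω : Set E3, MeasurableSet Ω ∧ Ω ⊆ Λ ∧ HasFinPer Ω ∧
      vol Ω = ρ * vol Λ ∧ t = ldEnergy Λ ρ Ω}) :
    ∃ s ∈ {t : ℝ | ∃ Ω : Set E3, MeasurableSet Ω ∧ Ω ⊆ Λ ∧ HasFinPer Ω ∧
      vol Ω = (1 - ρ) * vol Λ ∧ t = ldEnergy Λ (1 - ρ) Ω}, s ≤ t + P := by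
  obtain ⟨Ω, hm, hsub, hf, hv, rfl⟩ := ht
  obtain ⟨h1, h2⟩ := aux_perCand_diff Λ Ω hm hsub P hP hf
  refine ⟨_, ⟨Λ \ Ω, hΛ.diff hm, sdiff_subset, h1, ?_, rfl⟩, ?_⟩
  · have : vol (Λ \ Ω) = vol Λ - vol Ω := measureReal_sdiff hsub hm hfin
    rw [this, hv]; ring
  · have hind : ∀ x, (Λ \ Ω).indicator (fun _ => (1:ℝ)) x
        - (1 - ρ) * Λ.indicator (fun _ => (1:ℝ)) x
        = -(Ω.indicator (fun _ => (1:ℝ)) x - ρ * Λ.indicator (fun _ => (1:ℝ)) x) := by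
      intro x
      by_cases h1 : x ∈ Ω
      · have h2 := hsub h1
        simp [h1, h2]
      · by_cases h2 : x ∈ Λ <;> simp [h1, h2]
    unfold ldEnergy
    simp_rw [hind, neg_mul_neg]
    linarith

lemma aux_sInf_le (A B : Set ℝ) (P : ℝ) (hP : 0 ≤ P) (hAB : ∀ a ∈ A, ∃ b ∈ B, b ≤ a + P)
    (hBA : ∀ b ∈ B, ∃ a ∈ A, a ≤ b + P) : sInf B ≤ sInf A + P := by
  rcases A.eq_empty_or_nonempty with rfl | hA
  · have : B = ∅ := by
      by_contra hB
      obtain ⟨b, hb⟩ := nonempty_iff_ne_empty.2 hB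
      obtain ⟨a, ha, _⟩ := hBA b hb
      exact ha
    simpa [this] using hP
  by_cases hB : BddBelow B
  · rw [← sub_le_iff_le_add]
    refine le_csInf hA fun a ha => ?_
    obtain ⟨b, hb, hba⟩ := hAB a ha
    have := csInf_le hB hb
    linarith
  · have hA' : ¬ BddBelow A := by
      rintro ⟨m, hm⟩
      refine hB ⟨m - P, fun b hb => ?_⟩
      obtain ⟨a, ha, hab⟩ := hBA b hb
      have := hm ha
      linarith
    rw [Real.sInf_of_not_bddBelow hB, Real.sInf_of_not_bddBelow hA']
    linarith

lemma aux_EE (Λ : Set E3) (hΛ : MeasurableSet Λ) (hfin : volume Λ ≠ ⊤)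
    (P : ℝ) (hP : ∀ a ∈ perCand Λ, a ≤ P) (ρ : ℝ) :
    |EE Λ ρ - EE Λ (1 - ρ)| ≤ P := by
  have hP0 : 0 ≤ P := hP 0 (aux_perCand_zero _)
  have s1 := aux_step Λ hΛ hfin P hP ρ
  have s2 := aux_step Λ hΛ hfin P hP (1 - ρ)
  rw [sub_sub_cancel] at s2
  have h1 := aux_sInf_le _ _ P hP0 s1 s2
  have h2 := aux_sInf_le _ _ P hP0 s2 s1
  change EE Λ (1 - ρ) ≤ EE Λ ρ + P at h1
  change EE Λ ρ ≤ EE Λ (1 - ρ) + P at h2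
  rw [abs_le]
  constructor <;> linarith

lemma aux_admissible : IsAdmissibleSeq (1/2) 2 (8 * volume.real (ball (0:E3) 1) + 1)
    (fun n => ball 0 ((n:ℝ) + 1)) (fun n => (n:ℝ) + 1) := by
  have hc := aux_vol_ball_pos
  refine ⟨tendsto_atTop_add_const_right _ _ tendsto_natCast_atTop_atTop, fun n => ?_⟩
  have hn : (0:ℝ) ≤ n := n.cast_nonneg
  refine ⟨isOpen_ball, isBounded_ball, aux_lipschitz _ (by linarith), ?_, subset_rfl,
    aux_fisher _ (by positivity)⟩
  exact ball_subset_ball (div_le_self (by positivity) (by linarith))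

/-- **Symmetry of the thermodynamic limit** about `ρ = 1/2`: `e(ρ) = e(1-ρ)`. -/
theorem thermo_limit_symmetric (e : ℝ → ℝ) (he : IsThermoLimit e)
    (ρ : ℝ) (hρ0 : 0 ≤ ρ) (hρ1 : ρ ≤ 1) :
    e ρ = e (1 - ρ) := by
  have hc := aux_vol_ball_pos
  set c := volume.real (ball (0:E3) 1) with hcdef
  have t1 := he ρ hρ0 hρ1 (1/2) 2 (8 * c + 1) _ _ (by norm_num) (by norm_num) (by positivity)
    aux_admissible
  have t2 := he (1 - ρ) (by linarith) (by linarith) (1/2) 2 (8 * c + 1) _ _ (by norm_num)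
    (by norm_num) (by positivity) aux_admissible
  have t3 := t1.sub t2
  have t4 : Tendsto (fun n : ℕ => 24 * (1 / ((n:ℝ) + 1))) atTop (𝓝 (24 * 0)) :=
    tendsto_one_div_add_atTop_nhds_zero_nat.const_mul 24
  rw [mul_zero] at t4
  have t5 := squeeze_zero_norm (fun n : ℕ => ?_) t4
    (f := fun n : ℕ => EE (ball 0 ((n:ℝ) + 1)) ρ / vol (ball 0 ((n:ℝ) + 1))
      - EE (ball 0 ((n:ℝ) + 1)) (1 - ρ) / vol (ball 0 ((n:ℝ) + 1)))
  · have := tendsto_nhds_unique t3 t5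
    linarith
  · have hn : (0:ℝ) < (n:ℝ) + 1 := by positivity
    have hv : vol (ball (0:E3) ((n:ℝ) + 1)) = ((n:ℝ) + 1) ^ 3 * c := aux_vol_ball _ hn.le
    have h := aux_EE (ball (0:E3) ((n:ℝ) + 1)) measurableSet_ball measure_ball_lt_top.ne _
      (aux_per_ball _ hn) ρ
    rw [← sub_div, hv, norm_div, Real.norm_eq_abs, Real.norm_of_nonneg (by positivity),
      div_le_iff₀ (by positivity)]
    refine h.trans (le_of_eq ?_)
    rw [← hcdef]
    field_simp

end
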